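/- arXiv:1903.07024 — 7 statements merged into one kernel-verified Lean document; each statement's English description precedes it below -/
import Mathlib

section
/- For all integers i, k, l, j with i < k < l < j, we have 2^j · (l − i) > 2^l · (j − i). -/
theorem pow_nested_ineq (i k l j : ℤ) (hik : i < k) (hkl : k < l) (hlj : l < j) :
    (2 : ℝ) ^ j * ((l : ℝ) - (i : ℝ)) > (2 : ℝ) ^ l * ((j : ℝ) - (i : ℝ)) := by
  obtain ⟨n, hn⟩ := Int.eq_ofNat_of_zero_le (sub_nonneg.mpr hlj.le)
  obtain rfl : j = l + (n : ℤ) := by omega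
  have hn1 : (1 : ℝ) ≤ n := by
    have : 1 ≤ n := by omega
    exact_mod_cast this
  have ha : (2 : ℝ) ≤ (l : ℝ) - i := by
    have : 2 ≤ l - i := by omega
    exact_mod_cast this
  have hp : (n : ℝ) + 1 ≤ 2 ^ n := by
    have : n + 1 ≤ 2 ^ n := Nat.lt_two_pow_self
    exact_mod_cast this
  rw [zpow_add₀ (by norm_num), zpow_natCast, mul_assoc, gt_iff_lt]
  apply mul_lt_mul_of_pos_left _ (by positivity)
  push_cast
  nlinarith [mul_le_mul_of_nonneg_right hp (by linarith : (0 : ℝ) ≤ (l : ℝ) - i),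
    mul_le_mul_of_nonneg_left ha (by linarith : (0 : ℝ) ≤ n)]
end

section
/- For all integers i, k, j, l with i < k < j < l, the closed segments seg(i,j) and seg(k,l) have nonempty intersection. -/
/-- The grounded segment associated to the integer interval `[i, j]`:
the closed line segment in `ℝ²` from `(i, 0)` to `(j, 2 ^ j)`. -/
def seg (i j : ℤ) : Set (ℝ × ℝ) :=
  segment ℝ ((i : ℝ), (0 : ℝ)) ((j : ℝ), (2 : ℝ) ^ j)

theorem seg_overlap_inter (i k j l : ℤ) (hik : i < k) (hkj : k < j) (hjl : j < l) :
    (seg i j ∩ seg k l).Nonempty := by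
  have hA : (0:ℝ) < 2 ^ j := by positivity
  obtain ⟨d, hd⟩ : ∃ d : ℕ, l = j + d := ⟨(l - j).toNat, by omega⟩
  have hB : (2:ℝ) ^ l = 2 ^ j * 2 ^ d := by
    rw [hd, zpow_add₀ (by norm_num), zpow_natCast]
  have hd2 : (1:ℝ) + d ≤ 2 ^ d := by
    have h : d + 1 ≤ 2 ^ d := Nat.lt_two_pow_self
    have h' : ((d + 1 : ℕ) : ℝ) ≤ ((2 ^ d : ℕ) : ℝ) := by exact_mod_cast h
    push_cast at h'
    linarith
  have hl : (l:ℝ) = j + d := by rw [hd]; push_cast; ring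
  have h1 : (0:ℝ) < k - i := by
    have : (i:ℝ) < k := by exact_mod_cast hik
    linarith
  have h2 : (1:ℝ) ≤ j - k := by
    have : ((k + 1 : ℤ):ℝ) ≤ j := by exact_mod_cast hkj
    push_cast at this
    linarith
  have hd0 : (0:ℝ) ≤ d := Nat.cast_nonneg d
  unfold seg
  rw [hB, hl]
  generalize (2:ℝ) ^ j = A at *
  generalize (2:ℝ) ^ d = P at *
  generalize (d:ℝ) = e at *
  generalize (i:ℝ) = x at *
  generalize (j:ℝ) = y at *
  generalize (k:ℝ) = z at *
  have h3 : y + e - z ≤ P * (y - z) := by nlinarith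
  have hD : P * (z - x) ≤ P * (y - x) - (y + e - z) := by linarith
  have hP : 1 ≤ P := by linarith
  have hD1 : z - x ≤ P * (z - x) := by nlinarith
  obtain ⟨D, hDe⟩ : ∃ D, D = P * (y - x) - (y + e - z) := ⟨_, rfl⟩
  rw [← hDe] at hD
  have hD0 : 0 < D := by linarith
  rw [segment_eq_image, segment_eq_image]
  refine ⟨(x + P * (z - x) / D * (y - x), P * (z - x) / D * A),
    ⟨P * (z - x) / D, ⟨by positivity, (div_le_one hD0).2 hD⟩, ?_⟩,
    ⟨(z - x) / D, ⟨by positivity, (div_le_one hD0).2 (by linarith)⟩, ?_⟩⟩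
  · ext <;> simp <;> ring
  · ext
    · simp
      field_simp
      rw [hDe]
      ring
    · simp
      ring
end

section
/- For all integers i, k, l, j with i < k < l < j (so that the interval [k,l] is strictly contained in the interval [i,j]), the closed segments seg(i,j) and seg(k,l) are disjoint. -/
theorem seg_nested_disjoint (i k l j : ℤ) (hik : i < k) (hkl : k < l) (hlj : l < j) :
    seg i j ∩ seg k l = ∅ := by
  rw [Set.eq_empty_iff_forall_notMem]
  rintro p ⟨hp, hq⟩
  simp only [seg] at hp hq
  rw [segment_eq_image] at hp hq
  obtain ⟨s, ⟨hs0, hs1⟩, rfl⟩ := hp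
  obtain ⟨t, ⟨ht0, ht1⟩, h⟩ := hq
  obtain ⟨d, rfl⟩ : ∃ d : ℕ, j = l + d := ⟨(j - l).toNat, by omega⟩
  have h1 := congrArg Prod.fst h
  have h2 := congrArg Prod.snd h
  simp only [Prod.fst_add, Prod.smul_fst, smul_eq_mul, Prod.snd_add, Prod.smul_snd, mul_zero,
    zero_add, Int.cast_add, Int.cast_natCast] at h1 h2
  rw [zpow_add₀ (by norm_num : (2 : ℝ) ≠ 0), zpow_natCast] at h2
  have hl : (0 : ℝ) < (2 : ℝ) ^ l := by positivity
  have ht : t = s * (2 : ℝ) ^ d := by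
    apply mul_right_cancel₀ hl.ne'
    rw [h2]; ring
  have hP : (d : ℝ) + 1 ≤ (2 : ℝ) ^ d := by
    exact_mod_cast Nat.lt_two_pow_self (n := d)
  have hd : (1 : ℝ) ≤ d := by
    have : 1 ≤ d := by omega
    exact_mod_cast this
  have ha : (i : ℝ) + 1 ≤ k := by exact_mod_cast hik
  have hb : (k : ℝ) + 1 ≤ l := by exact_mod_cast hkl
  generalize (2 : ℝ) ^ d = P at *
  subst ht
  have hs : s ≤ 1 / 2 := by nlinarith
  have e : ((k : ℝ) - i) = s * ((l - i + d) - P * (l - k)) := by linarith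
  have f : ((l : ℝ) - i + d) - P * (l - k) ≤ k - i := by nlinarith
  have g := mul_le_mul_of_nonneg_left f hs0
  nlinarith
end

section
/- Let i < j and k < l be integers such that i, j, k, l are pairwise distinct. Then the closed segments seg(i,j) and seg(k,l) have nonempty intersection if and only if the intervals [i,j] and [k,l] properly overlap, i.e., if and only if (i < k < j < l) or (k < i < l < j). -/
lemma mem_seg_iff' (i j : ℤ) (p : ℝ × ℝ) :
    p ∈ seg i j ↔ ∃ s : ℝ, 0 ≤ s ∧ s ≤ 1 ∧ p.1 = i + s * (j - i) ∧ p.2 = s * (2:ℝ) ^ j := by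
  obtain ⟨x, y⟩ := p
  unfold seg segment
  simp only [Set.mem_setOf_eq, Prod.smul_mk, Prod.mk_add_mk, Prod.mk.injEq, smul_eq_mul]
  constructor
  · rintro ⟨a, b, ha, hb, hab, h1, h2⟩
    refine ⟨b, hb, by linarith, ?_, by linarith⟩
    have : a = 1 - b := by linarith
    subst this
    linarith
  · rintro ⟨s, h0, h1, hx, hy⟩
    exact ⟨1 - s, s, by linarith, h0, by ring, by rw [hx]; ring, by rw [hy]; ring⟩

lemma seg_aux (i j k l : ℤ) (hij : i < j) (hkl : k < l)
    (hik : i ≠ k) (hjk : j ≠ k) (hjl : j < l) :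
    (seg i j ∩ seg k l).Nonempty ↔ (i < k ∧ k < j) := by
  obtain ⟨d, hd⟩ : ∃ d : ℕ, l = j + d := ⟨(l - j).toNat, by omega⟩
  have hP : (0:ℝ) < 2 ^ j := by positivity
  have hl : (2:ℝ) ^ l = 2 ^ j * 2 ^ d := by
    rw [hd, zpow_add₀ two_ne_zero, zpow_natCast]
  have hM : (d:ℝ) + 1 ≤ 2 ^ d := by
    exact_mod_cast Nat.lt_two_pow_self (n := d)
  have hd1 : (1:ℝ) ≤ d := by
    have : 1 ≤ d := by omega
    exact_mod_cast this
  have hlr : (l:ℝ) = j + d := by rw [hd]; push_cast; ring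
  have hijr : (i:ℝ) + 1 ≤ j := by exact_mod_cast hij
  generalize (2:ℝ) ^ d = M at hl hM
  constructor
  · rintro ⟨p, hp, hq⟩
    rw [mem_seg_iff'] at hp hq
    obtain ⟨s, hs0, hs1, hx, hy⟩ := hp
    obtain ⟨t, ht0, ht1, hx', hy'⟩ := hq
    have hst : s = t * M := by
      have : s * 2 ^ j = (t * M) * 2 ^ j := by rw [← hy, hy', hl]; ring
      exact mul_right_cancel₀ hP.ne' this
    have hxe := hx.symm.trans hx'
    have hkj : k < j := by
      by_contra h
      have h' : j < k := by omega
      have h' : (j:ℝ) + 1 ≤ k := by exact_mod_cast h'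
      have hkl' : (k:ℝ) + 1 ≤ l := by exact_mod_cast hkl
      nlinarith [mul_nonneg ht0 (by linarith : (0:ℝ) ≤ l - k),
        mul_nonneg (sub_nonneg.2 hs1) (by linarith : (0:ℝ) ≤ j - i)]
    refine ⟨?_, hkj⟩
    by_contra h
    have h' : k < i := by omega
    have h' : (k:ℝ) + 1 ≤ i := by exact_mod_cast h'
    have e : (i:ℝ) - k = t * ((l - k) - M * (j - i)) := by
      rw [hst] at hxe; linarith
    have hQ : 0 < ((l:ℝ) - k) - M * (j - i) := by
      by_contra hn
      nlinarith [mul_nonneg ht0 (sub_nonneg.2 (not_lt.1 hn))]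
    have h3 : M * ((i:ℝ) - k) ≤ (l - k) - M * (j - i) := by
      have : M * ((i:ℝ) - k) = s * ((l - k) - M * (j - i)) := by rw [e, hst]; ring
      rw [this]; nlinarith
    nlinarith [mul_nonneg (sub_nonneg.2 hM) (by linarith : (0:ℝ) ≤ j - k)]
  · rintro ⟨h1, h2⟩
    have h1 : (i:ℝ) + 1 ≤ k := by exact_mod_cast h1
    have h2 : (k:ℝ) + 1 ≤ j := by exact_mod_cast h2
    have key : (l:ℝ) - k ≤ M * (j - k) := by
      nlinarith [mul_nonneg (sub_nonneg.2 hM) (by linarith : (0:ℝ) ≤ j - k)]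
    have hQ : 0 < M * ((j:ℝ) - i) - (l - k) := by nlinarith
    have hM0 : 0 < M := by linarith
    obtain ⟨t, ht⟩ : ∃ t : ℝ, t = (k - i) / (M * ((j:ℝ) - i) - (l - k)) := ⟨_, rfl⟩
    have e : t * (M * ((j:ℝ) - i) - (l - k)) = k - i := by
      rw [ht]; field_simp
    have ht0 : 0 ≤ t := by rw [ht]; exact div_nonneg (by linarith) hQ.le
    have htM : t * M ≤ 1 := by
      rw [ht, div_mul_eq_mul_div, div_le_one hQ]; linarith
    refine ⟨((k:ℝ) + t * (l - k), t * 2 ^ l), ?_, ?_⟩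
    · rw [mem_seg_iff']
      exact ⟨t * M, by positivity, htM, by simp only; linarith, by simp only [hl]; ring⟩
    · rw [mem_seg_iff']
      exact ⟨t, ht0, by nlinarith, rfl, rfl⟩

theorem seg_inter_iff_proper_overlap (i j k l : ℤ) (hij : i < j) (hkl : k < l)
    (hik : i ≠ k) (hil : i ≠ l) (hjk : j ≠ k) (hjl : j ≠ l) :
    (seg i j ∩ seg k l).Nonempty ↔
      (i < k ∧ k < j ∧ j < l) ∨ (k < i ∧ i < l ∧ l < j) := by
  rcases lt_or_gt_of_ne hjl with h | h
  · rw [seg_aux i j k l hij hkl hik hjk h]; omega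
  · rw [Set.inter_comm, seg_aux k l i j hkl hij hik.symm hil.symm h]; omega
end

section
/- Let G be a simple graph on vertex set Fin n, and suppose there are functions L, R : Fin n → ℤ with L v < R v for every v, such that the 2n integers L v, R v (over all v) are pairwise distinct, and such that for all u ≠ v, u and v are adjacent in G if and only if the intervals [L u, R u] and [L v, R v] properly overlap (i.e., L u < L v < R u < R v or L v < L u < R v < R u). Then there exist functions p, q : Fin n → ℝ² such that for every v the point p v lies on the x-axis (second coordinate 0), the point q v lies in the open upper half-plane (second coordinate > 0), and for all u ≠ v the closed segments from p u to q u and from p v to q v have nonempty intersection if and only if u and v are adjacent in G. (In the paper's construction one takes p v = (L v, 0) and q v = (R v, 2^{R v}).) -/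
theorem gs_mem (a b h : ℝ) (hab : a < b) (z : ℝ × ℝ) :
    z ∈ segment ℝ ((a, 0) : ℝ × ℝ) (b, h) ↔
      a ≤ z.1 ∧ z.1 ≤ b ∧ z.2 = h / (b - a) * (z.1 - a) := by
  have hd : 0 < b - a := by linarith
  rw [segment_eq_image']
  constructor
  · rintro ⟨t, ⟨h0, h1⟩, rfl⟩
    simp only [Prod.fst_add, Prod.snd_add, Prod.smul_fst, Prod.smul_snd, Prod.fst_sub,
      Prod.snd_sub, smul_eq_mul]
    refine ⟨by nlinarith, by nlinarith, ?_⟩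
    field_simp
    ring
  · rintro ⟨h1, h2, h3⟩
    refine ⟨(z.1 - a) / (b - a), ⟨div_nonneg (by linarith) hd.le, ?_⟩, ?_⟩
    · rw [div_le_one hd]; linarith
    · ext
      · simp only [Prod.fst_add, Prod.smul_fst, Prod.fst_sub, smul_eq_mul]
        field_simp
        ring
      · simp only [Prod.snd_add, Prod.smul_snd, Prod.snd_sub, smul_eq_mul]
        rw [h3]
        field_simp
        ring

theorem gs_key (a b d : ℤ) (hbd : b < d) :
    ((d : ℝ) - b + 1) * (2 : ℝ) ^ b ≤ (2 : ℝ) ^ d := by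
  obtain ⟨k, hk⟩ := Int.eq_ofNat_of_zero_le (show 0 ≤ d - b by omega)
  obtain rfl : d = b + k := by omega
  rw [zpow_add₀ (by norm_num), zpow_natCast]
  have h1 : (k : ℝ) + 1 ≤ 2 ^ k := by
    exact_mod_cast (Nat.lt_two_pow_self (n := k))
  have h2 : (0 : ℝ) < (2 : ℝ) ^ b := by positivity
  push_cast
  nlinarith

theorem gs_core (a b c d : ℤ) (hab : a < b) (hcd : c < d) (hac : a < c) (hbc : b ≠ c)
    (hbd : b ≠ d) :
    (segment ℝ (((a : ℝ), 0) : ℝ × ℝ) ((b : ℝ), (2 : ℝ) ^ b) ∩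
      segment ℝ (((c : ℝ), 0) : ℝ × ℝ) ((d : ℝ), (2 : ℝ) ^ d)).Nonempty ↔ c < b ∧ b < d := by
  have hab' : (a : ℝ) < b := by exact_mod_cast hab
  have hcd' : (c : ℝ) < d := by exact_mod_cast hcd
  have hac' : (a : ℝ) < c := by exact_mod_cast hac
  have hB : (0 : ℝ) < (2 : ℝ) ^ b := by positivity
  have hD : (0 : ℝ) < (2 : ℝ) ^ d := by positivity
  have hba : (0 : ℝ) < b - a := by linarith
  have hdc : (0 : ℝ) < d - c := by linarith
  set B : ℝ := (2 : ℝ) ^ b with hBdef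
  set D : ℝ := (2 : ℝ) ^ d with hDdef
  obtain ⟨s, hs⟩ : ∃ s, s = B / (b - a) := ⟨_, rfl⟩
  obtain ⟨t, ht⟩ : ∃ t, t = D / (d - c) := ⟨_, rfl⟩
  have hs0 : 0 < s := by rw [hs]; positivity
  have ht0 : 0 < t := by rw [ht]; positivity
  have hsB : s * (b - a) = B := by rw [hs]; field_simp
  have htD : t * (d - c) = D := by rw [ht]; field_simp
  constructor
  · rintro ⟨z, h1, h2⟩
    rw [gs_mem _ _ _ hab', ← hs] at h1
    rw [gs_mem _ _ _ hcd', ← ht] at h2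
    obtain ⟨h1, h1', h1''⟩ := h1
    obtain ⟨h2, h2', h2''⟩ := h2
    have hcb : c < b := by
      have : (c : ℝ) ≤ b := by linarith
      have : c ≤ b := by exact_mod_cast this
      omega
    refine ⟨hcb, ?_⟩
    by_contra hcon
    have hdb : d < b := by omega
    have key := gs_key a d b hdb
    rw [← hBdef, ← hDdef] at key
    have hdb' : (d : ℝ) < b := by exact_mod_cast hdb
    have hda : (2 : ℝ) ≤ d - a := by
      have : (2 : ℤ) ≤ d - a := by omega
      exact_mod_cast this
    -- height of the first segment at `d` exceeds `D`
    have hgt : D < s * (d - a) := by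
      have e : s * (d - a) * (b - a) = B * (d - a) := by rw [← hsB]; ring
      have : D * (b - a) < B * (d - a) := by
        have : (b - d + 1) * D * (d - a) ≤ B * (d - a) :=
          mul_le_mul_of_nonneg_right key (by linarith)
        have h5 : (b : ℝ) - a < (b - d + 1) * (d - a) := by nlinarith
        nlinarith
      rw [← e] at this
      exact lt_of_mul_lt_mul_right this hba.le
    have heq : s * (z.1 - a) = t * (z.1 - c) := by rw [← h1'', h2'']
    have hlow : 0 < s * (c - a) := mul_pos hs0 (by linarith)
    -- the difference is affine and positive at both ends
    have e2 : (s * (z.1 - a) - t * (z.1 - c)) * (d - c) =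
        (s * (c - a)) * (d - z.1) + (s * (d - a) - t * (d - c)) * (z.1 - c) := by ring
    rw [heq, sub_self, zero_mul, htD] at e2
    have p1 : 0 ≤ (s * (c - a)) * (d - z.1) := mul_nonneg hlow.le (by linarith)
    have p2 : 0 ≤ (s * (d - a) - D) * (z.1 - c) := mul_nonneg (by linarith) (by linarith)
    have q1 : (s * (c - a)) * (d - z.1) = 0 := by linarith
    have q2 : (s * (d - a) - D) * (z.1 - c) = 0 := by linarith
    rcases mul_eq_zero.1 q1 with h | h
    · linarith
    rcases mul_eq_zero.1 q2 with h' | h' <;> linarith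
  · rintro ⟨hcb, hbd'⟩
    have hcb' : (c : ℝ) < b := by exact_mod_cast hcb
    have hbd'' : (b : ℝ) < d := by exact_mod_cast hbd'
    have key := gs_key a b d hbd'
    rw [← hBdef, ← hDdef] at key
    have h1 : (1 : ℝ) ≤ b - c := by
      have : (1 : ℤ) ≤ b - c := by omega
      exact_mod_cast this
    have hge : B ≤ t * (b - c) := by
      have e : t * (b - c) * (d - c) = D * (b - c) := by rw [← htD]; ring
      have : B * (d - c) ≤ D * (b - c) := by
        have : (d - b + 1) * B * (b - c) ≤ D * (b - c) :=
          mul_le_mul_of_nonneg_right key (by linarith)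
        have h5 : (d : ℝ) - c ≤ (d - b + 1) * (b - c) := by nlinarith
        nlinarith
      rw [← e] at this
      exact le_of_mul_le_mul_right this hdc
    have hst : 0 < t - s := by
      have : s * (b - c) < t * (b - c) := by nlinarith
      have := lt_of_mul_lt_mul_right this (by linarith)
      linarith
    obtain ⟨w, hw⟩ : ∃ w, w = s * (c - a) / (t - s) := ⟨_, rfl⟩
    have hw' : w * (t - s) = s * (c - a) := by rw [hw]; field_simp
    have hw0 : 0 ≤ w := by
      rw [hw]; exact div_nonneg (mul_nonneg hs0.le (by linarith)) hst.le
    have hwb : w ≤ b - c := by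
      rw [hw, div_le_iff₀ hst]; nlinarith
    refine ⟨(c + w, t * w), ?_, ?_⟩
    · rw [gs_mem _ _ _ hab', ← hs]
      refine ⟨by simp only []; linarith, by simp only []; linarith, ?_⟩
      simp only []; linarith
    · rw [gs_mem _ _ _ hcd', ← ht]
      refine ⟨by simp only []; linarith, by simp only []; linarith, ?_⟩
      simp only []; ring

theorem overlap_graph_has_grounded_segment_representation
    (n : ℕ) (G : SimpleGraph (Fin n)) (L R : Fin n → ℤ)
    (hLR : ∀ v, L v < R v)
    (hdistinct : Function.Injective (Sum.elim L R : Fin n ⊕ Fin n → ℤ))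
    (hadj : ∀ u v : Fin n, u ≠ v →
      (G.Adj u v ↔ (L u < L v ∧ L v < R u ∧ R u < R v) ∨
                   (L v < L u ∧ L u < R v ∧ R v < R u))) :
    ∃ p q : Fin n → ℝ × ℝ,
      (∀ v, (p v).2 = 0) ∧ (∀ v, (q v).2 > 0) ∧
      ∀ u v : Fin n, u ≠ v →
        ((segment ℝ (p u) (q u) ∩ segment ℝ (p v) (q v)).Nonempty ↔ G.Adj u v) := by
  have hL : ∀ u v, u ≠ v → L u ≠ L v := fun u v h e =>
    h (Sum.inl_injective (hdistinct (a₁ := Sum.inl u) (a₂ := Sum.inl v) e))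
  have hR : ∀ u v, u ≠ v → R u ≠ R v := fun u v h e =>
    h (Sum.inr_injective (hdistinct (a₁ := Sum.inr u) (a₂ := Sum.inr v) e))
  have hRL : ∀ u v, R u ≠ L v := fun u v e =>
    Sum.inr_ne_inl (hdistinct (a₁ := Sum.inr u) (a₂ := Sum.inl v) e)
  refine ⟨fun v => ((L v : ℝ), 0), fun v => ((R v : ℝ), (2 : ℝ) ^ (R v)), fun v => rfl,
    fun v => by simp only []; positivity, ?_⟩
  intro u v huv
  rw [hadj u v huv]
  rcases lt_or_gt_of_ne (hL u v huv) with h | h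
  · rw [gs_core _ _ _ _ (hLR u) (hLR v) h (hRL u v) (hR u v huv)]
    omega
  · rw [Set.inter_comm, gs_core _ _ _ _ (hLR v) (hLR u) h (hRL v u) (hR v u huv.symm)]
    omega
end

section
/- The wheel graph W₅ is a grounded L graph: there exist functions a, h, w from the six vertices of W₅ to ℝ, with h v > 0 and w v > 0 for every vertex v, such that for all distinct vertices u, v the shapes Λ(a u, h u, w u) and Λ(a v, h v, w v) have nonempty intersection if and only if u and v are adjacent in W₅. -/
/-- The grounded L-shape with foot `(a, 0)`, height `h` and horizontal arm length `w`:
`({a} × [0, h]) ∪ ([a, a + w] × {h})`. -/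
def Lshape (a h w : ℝ) : Set (ℝ × ℝ) :=
  ({a} ×ˢ Set.Icc 0 h) ∪ (Set.Icc a (a + w) ×ˢ {h})

/-- The wheel graph `W₅`: vertex `0` is the hub, adjacent to all of `1,…,5`, and
`1,2,3,4,5` form a 5-cycle. -/
def W5 : SimpleGraph (Fin 6) :=
  SimpleGraph.fromRel (fun u v =>
    u = 0 ∨ (u = 1 ∧ v = 2) ∨ (u = 2 ∧ v = 3) ∨ (u = 3 ∧ v = 4) ∨
      (u = 4 ∧ v = 5) ∨ (u = 5 ∧ v = 1))

lemma Lshape_inter_iff {a h w a' h' w' : ℝ} (hp : 0 < h) (haa : a < a')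
    (hh : h ≠ h') :
    (Lshape a h w ∩ Lshape a' h' w').Nonempty ↔ (a' ≤ a + w ∧ h ≤ h') := by
  constructor
  · rintro ⟨⟨x, y⟩, h1, h2⟩
    simp only [Lshape, Set.mem_union, Set.mem_prod, Set.mem_singleton_iff, Set.mem_Icc] at h1 h2
    rcases h1 with ⟨e1, e2, e3⟩ | ⟨⟨e1, e2⟩, e3⟩ <;>
    rcases h2 with ⟨f1, f2, f3⟩ | ⟨⟨f1, f2⟩, f3⟩
    · linarith
    · linarith
    · constructor <;> linarith
    · exact absurd (e3.symm.trans f3) hh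
  · rintro ⟨h1, h2⟩
    refine ⟨(a', h), ?_, ?_⟩
    · right
      simp only [Set.mem_prod, Set.mem_singleton_iff, Set.mem_Icc]
      exact ⟨⟨haa.le, h1⟩, trivial⟩
    · left
      simp only [Set.mem_prod, Set.mem_singleton_iff, Set.mem_Icc]
      exact ⟨trivial, hp.le, h2⟩

theorem W5_is_grounded_L_graph :
    ∃ a h w : Fin 6 → ℝ,
      (∀ v, 0 < h v) ∧ (∀ v, 0 < w v) ∧
      ∀ u v : Fin 6, u ≠ v →
        ((Lshape (a u) (h u) (w u) ∩ Lshape (a v) (h v) (w v)).Nonempty ↔ W5.Adj u v) := by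
  refine ⟨![0, 2, 4, 10, 6, 8], ![1, 3, 5, 6, 2, 4], ![11, 7, 7, 1, 5, 1], ?_, ?_, ?_⟩
  · intro v; fin_cases v <;> norm_num
  · intro v; fin_cases v <;> norm_num
  · intro u v huv
    fin_cases u <;> fin_cases v <;>
    first
    | exact absurd rfl huv
    | (refine (Lshape_inter_iff ?_ ?_ ?_).trans ?_
       · (norm_num; done)
       · (norm_num; done)
       · (norm_num; done)
       · rw [W5, SimpleGraph.fromRel_adj]
         first
         | (refine iff_of_true ?_ ?_
            · (norm_num; done)
            · decide)
         | (refine iff_of_false ?_ ?_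
            · (norm_num; done)
            · decide))
    | (rw [Set.inter_comm]
       refine (Lshape_inter_iff ?_ ?_ ?_).trans ?_
       · (norm_num; done)
       · (norm_num; done)
       · (norm_num; done)
       · rw [W5, SimpleGraph.fromRel_adj]
         first
         | (refine iff_of_true ?_ ?_
            · (norm_num; done)
            · decide)
         | (refine iff_of_false ?_ ?_
            · (norm_num; done)
            · decide))
end

section
/- Let G be a graph on a finite vertex set V with a grounded square-L representation given by a, h : V → ℝ with h v > 0 for all v, i.e., for all distinct u, v ∈ V, u and v are adjacent in G if and only if Λ(a u, h u, h u) ∩ Λ(a v, h v, h v) ≠ ∅. Assume a and h are injective, and let w ∈ V be the vertex with maximum height h w. Then every neighbor v of w in G satisfies a v < a w, h v < h w, and a w ≤ a v + h v; that is, the shape of every neighbor of the highest vertex intersects the highest shape from the left. -/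
theorem neighbors_of_highest_intersect_from_left
    {V : Type*} [Fintype V] (G : SimpleGraph V) (a h : V → ℝ)
    (hpos : ∀ v, 0 < h v)
    (hrep : ∀ u v : V, u ≠ v →
      (G.Adj u v ↔ (Lshape (a u) (h u) (h u) ∩ Lshape (a v) (h v) (h v)).Nonempty))
    (ha : Function.Injective a) (hh : Function.Injective h)
    (w : V) (hmax : ∀ v, h v ≤ h w) :
    ∀ v : V, G.Adj w v → a v < a w ∧ h v < h w ∧ a w ≤ a v + h v := by
  intro v hadj
  have hne : w ≠ v := hadj.ne
  have hane : a w ≠ a v := fun e => hne (ha e)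
  have hhne : h v ≠ h w := fun e => hne (hh e).symm
  have hlt : h v < h w := lt_of_le_of_ne (hmax v) hhne
  obtain ⟨⟨x, y⟩, h1, h2⟩ := (hrep w v hne).1 hadj
  simp only [Lshape, Set.mem_union, Set.mem_prod, Set.mem_singleton_iff, Set.mem_Icc] at h1 h2
  rcases h1 with ⟨h1, h1a, h1b⟩ | ⟨⟨h1, h1a⟩, h1b⟩ <;>
    rcases h2 with ⟨h2, h2a, h2b⟩ | ⟨⟨h2, h2a⟩, h2b⟩
  · exact absurd (h1.symm.trans h2) hane
  · refine ⟨lt_of_le_of_ne ?_ hane.symm, hlt, ?_⟩ <;> linarith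
  · linarith
  · linarith
end
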